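/- arXiv:math/0611884 — 2 statements merged into one kernel-verified Lean document; each statement's English description precedes it below -/
import Mathlib

section
/- Let α > -1/2, set β = α (ultraspherical case). Then for every t > 0 and x, y ∈ (-1,1): ∑_{n≥0} R_n^{-1} e^{-nt} P_n^{α,α}(x) P_n^{α,α}(y) = (e^{((2α+1)/2)t} / 2^{α+1/2}) · sinh(t)/(cosh t - xy)^{α+3/2} · ∑_{n≥0} [((2α+3)/4)_n ((2α+5)/4)_n / ((α+1)_n n!)] · [(1-x²)(1-y²)/(cosh t - xy)²]ⁿ, both series converging absolutely (the inner sum is the Gauss hypergeometric series ₂F₁((2α+3)/4, (2α+5)/4; α+1; (1-x²)(1-y²)/(cosh t - xy)²)). -/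
open scoped BigOperators

/-- Pochhammer symbol `(a)_k = a(a+1)⋯(a+k-1)` for real `a`. -/
noncomputable def poch (a : ℝ) (k : ℕ) : ℝ := (ascPochhammer ℝ k).eval a

/-- The Jacobi polynomial `P_n^{α,β}` as a function on `ℝ`. -/
noncomputable def jacobiP (α β : ℝ) (n : ℕ) : ℝ → ℝ := fun x =>
  (poch (α + 1) n / (Nat.factorial n : ℝ)) *
    ∑ k ∈ Finset.range (n + 1),
      (poch (-(n : ℝ)) k * poch ((n : ℝ) + α + β + 1) k) /
        (poch (α + 1) k * (Nat.factorial k : ℝ)) * ((1 - x) / 2) ^ k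

/-- The normalization constant
`R_n = [Γ(α+β+2)/(2n+α+β+1)] ⬝ [(α+1)_n (β+1)_n / (Γ(α+β+n+1) n!)]`. -/
noncomputable def Rn (α β : ℝ) (n : ℕ) : ℝ :=
  Real.Gamma (α + β + 2) / (2 * (n : ℝ) + α + β + 1) *
    (poch (α + 1) n * poch (β + 1) n / (Real.Gamma (α + β + (n : ℝ) + 1) * (Nat.factorial n : ℝ)))

/-!
Let `Uₙ` be the ultraspherical polynomial of parameter `α` normalized by `Uₙ(1) = 1`. A polynomial
solution of the ultraspherical differential equation is determined by its value at `1`, and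
`∑ₖ ((1 - x²)(1 - y²))ᵏ Uₙ⁽²ᵏ⁾(xy) / (4ᵏ (α + 1)ₖ k!)` is such a solution in `x` with value `Uₙ(y)`
at `1`, hence equals `Uₙ(x) Uₙ(y)`. Since `Uₙ⁽²ᵏ⁾` is a multiple of the ultraspherical polynomial of
degree `n - 2k` and parameter `α + 2k`, summing over `n` against `rⁿ`, `r = e^{-t}`, produces the
Poisson kernels of parameters `α + 2k` at `xy`, and the remaining sum over `k` is the hypergeometric
series. The interchange of summations is absolutely convergent for small `r`, and the identity
extends to all `|r| < 1` because both sides are analytic in `r`; here the Sonin function gives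
`|Uₙ| ≤ 1` on `[-1, 1]`, hence the convergence of the left-hand side.
-/

open Polynomial Filter Topology Finset
open scoped Nat

section Pochhammer

lemma poch_zero (a : ℝ) : poch a 0 = 1 := by simp [poch]

lemma poch_succ (a : ℝ) (k : ℕ) : poch a (k + 1) = poch a k * (a + k) := by
  simp [poch, ascPochhammer_succ_eval]

lemma poch_add (a : ℝ) (m n : ℕ) : poch a (m + n) = poch a m * poch (a + m) n := by
  simp [poch, ← ascPochhammer_mul, eval_comp]

lemma poch_succ_left (a : ℝ) (k : ℕ) : poch a (k + 1) = a * poch (a + 1) k := by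
  simp [poch, ascPochhammer_succ_left, eval_comp]

lemma poch_pos {a : ℝ} (ha : 0 < a) (k : ℕ) : 0 < poch a k := ascPochhammer_pos k a ha

lemma poch_two_mul (a : ℝ) (k : ℕ) :
    poch a (2 * k) = 4 ^ k * poch (a / 2) k * poch (a / 2 + 1 / 2) k := by
  induction k with
  | zero => simp [poch_zero]
  | succ k ih =>
    rw [show 2 * (k + 1) = 2 * k + 1 + 1 by ring]
    simp only [poch_succ, ih]
    push_cast
    ring

lemma poch_neg_natCast_add (k p : ℕ) :
    poch (-((k + p : ℕ) : ℝ)) k * p ! = (-1) ^ k * (k + p)! := by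
  induction k generalizing p with
  | zero => simp [poch_zero]
  | succ k ih =>
    have h := ih (p + 1)
    rw [Nat.factorial_succ, show k + (p + 1) = k + 1 + p by ring] at h
    rw [poch_succ]
    push_cast at h ⊢
    linear_combination -h

lemma Gamma_add_natCast_eq_poch_mul {a : ℝ} (ha : 0 < a) (n : ℕ) :
    Real.Gamma (a + n) = poch a n * Real.Gamma a := by
  induction n with
  | zero => simp [poch_zero]
  | succ n ih =>
    rw [Nat.cast_succ, ← add_assoc, Real.Gamma_add_one (by positivity), ih, poch_succ]
    ring

lemma choose_add_sub_one_eq_poch_div (a : ℝ) (n : ℕ) :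
    Ring.choose (a + n - 1) n = poch a n / n ! := by
  rw [Ring.choose, show a + n - 1 - n + 1 = a by ring, eq_div_iff (by positivity), mul_comm,
    ← nsmul_eq_mul, Ring.factorial_nsmul_multichoose_eq_ascPochhammer, poch,
    ← ascPochhammer_smeval_eq_eval]

lemma hasSum_poch_div_factorial_mul_pow (a : ℝ) {z : ℝ} (hz : |z| < 1) :
    HasSum (fun k : ℕ => poch a k / k ! * z ^ k) ((1 - z) ^ (-a)) := by
  have h := (Real.one_div_one_sub_rpow_hasFPowerSeriesOnBall_zero a).hasSum (y := z) (by
    simpa [enorm_eq_nnnorm, ← NNReal.coe_lt_coe] using hz)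
  simp only [FormalMultilinearSeries.ofScalars_apply_eq, zero_add, smul_eq_mul,
    choose_add_sub_one_eq_poch_div] at h
  rwa [one_div, ← Real.rpow_neg (by linarith [(abs_lt.1 hz).2])] at h

end Pochhammer

section Hypergeometric

variable {a b c : ℝ}

lemma mem_eball_radius_ordinaryHypergeometricSeries
    (habc : ∀ k : ℕ, (k : ℝ) ≠ -a ∧ (k : ℝ) ≠ -b ∧ (k : ℝ) ≠ -c) {z : ℝ} (hz : |z| < 1) :
    z ∈ Metric.eball (0 : ℝ) (ordinaryHypergeometricSeries ℝ a b c).radius := by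
  rw [ordinaryHypergeometricSeries_radius_eq_one ℝ a b c habc]
  simpa [enorm_eq_nnnorm, ← NNReal.coe_lt_coe] using hz

lemma analyticAt_ordinaryHypergeometric
    (habc : ∀ k : ℕ, (k : ℝ) ≠ -a ∧ (k : ℝ) ≠ -b ∧ (k : ℝ) ≠ -c) {z : ℝ} (hz : |z| < 1) :
    AnalyticAt ℝ (₂F₁ a b c : ℝ → ℝ) z := by
  have hmem := mem_eball_radius_ordinaryHypergeometricSeries habc hz
  exact ((ordinaryHypergeometricSeries ℝ a b c).hasFPowerSeriesOnBall
    (pos_of_gt hmem)).analyticAt_of_mem hmem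

lemma ordinaryHypergeometricSeries_apply_eq_poch (z : ℝ) (n : ℕ) :
    (ordinaryHypergeometricSeries ℝ a b c n fun _ => z) =
      poch a n * poch b n / (poch c n * n !) * z ^ n := by
  rw [ordinaryHypergeometricSeries_apply_eq, smul_eq_mul, poch, poch, poch]
  field_simp

lemma summable_abs_ordinaryHypergeometric
    (habc : ∀ k : ℕ, (k : ℝ) ≠ -a ∧ (k : ℝ) ≠ -b ∧ (k : ℝ) ≠ -c) {z : ℝ} (hz : |z| < 1) :
    Summable fun n : ℕ => |poch a n * poch b n / (poch c n * n !) * z ^ n| := by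
  simpa only [ordinaryHypergeometricSeries_apply_eq_poch, Real.norm_eq_abs] using
    (ordinaryHypergeometricSeries ℝ a b c).summable_norm_apply
      (mem_eball_radius_ordinaryHypergeometricSeries habc hz)

lemma ordinaryHypergeometric_eq_tsum_poch (z : ℝ) :
    ₂F₁ a b c z = ∑' n : ℕ, poch a n * poch b n / (poch c n * n !) * z ^ n :=
  tsum_congr fun n => ordinaryHypergeometricSeries_apply_eq_poch z n

lemma hasSum_ordinaryHypergeometric
    (habc : ∀ k : ℕ, (k : ℝ) ≠ -a ∧ (k : ℝ) ≠ -b ∧ (k : ℝ) ≠ -c) {z : ℝ} (hz : |z| < 1) :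
    HasSum (fun n : ℕ => poch a n * poch b n / (poch c n * n !) * z ^ n) (₂F₁ a b c z) := by
  rw [ordinaryHypergeometric_eq_tsum_poch]
  exact (summable_abs_ordinaryHypergeometric habc hz).of_abs.hasSum

end Hypergeometric

section Series

lemma hasSum_prod_of_norm_le {ι κ E : Type*} [NormedAddCommGroup E] [CompleteSpace E]
    {F : ι → κ → E} {M : ι → κ → ℝ} {G : ι → ℝ} {g : ι → E} {T : E}
    (hFM : ∀ i j, ‖F i j‖ ≤ M i j) (hM : ∀ i, HasSum (M i) (G i)) (hG : Summable G)
    (hF : ∀ i, HasSum (F i) (g i)) (hg : HasSum g T) :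
    HasSum (fun p : ι × κ => F p.1 p.2) T := by
  have hMsum : Summable fun p : ι × κ => M p.1 p.2 := by
    rw [summable_prod_of_nonneg fun p => (norm_nonneg _).trans (hFM p.1 p.2)]
    exact ⟨fun i => (hM i).summable, hG.congr fun i => (hM i).tsum_eq.symm⟩
  have hFsum := (hMsum.of_norm_bounded fun p => hFM p.1 p.2).hasSum
  rwa [(hFsum.prod_fiberwise hF).unique hg] at hFsum

lemma hasSum_sum_range_div {E : Type*} [AddCommMonoid E] [TopologicalSpace E] [ContinuousAdd E]
    [RegularSpace E] {d : ℕ} (hd : 0 < d) {F : ℕ → ℕ → E} {T : E}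
    (hF : HasSum (fun p : ℕ × ℕ => F p.1 p.2) T) :
    HasSum (fun n => ∑ k ∈ range (n / d + 1), F k (n - d * k)) T := by
  let e : ℕ × ℕ → ℕ × ℕ := fun p => (p.2 + d * p.1, p.1)
  let E' : ℕ × ℕ → E := fun q => if d * q.2 ≤ q.1 then F q.2 (q.1 - d * q.2) else 0
  have he : Function.Injective e := by
    rintro ⟨k, m⟩ ⟨k', m'⟩ h
    simp only [e, Prod.mk.injEq] at h
    obtain ⟨hm, rfl⟩ := h
    simpa using hm
  have hE' : HasSum E' T := by
    rw [← he.hasSum_iff]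
    · simpa [E', e, Function.comp_def] using hF
    · rintro ⟨n, k⟩ hnk
      refine if_neg fun h => hnk ⟨(k, n - d * k), ?_⟩
      simp [e, Nat.sub_add_cancel h]
  have hmem (n k : ℕ) : k ∈ range (n / d + 1) ↔ d * k ≤ n := by
    rw [mem_range_succ_iff, Nat.le_div_iff_mul_le hd, mul_comm]
  refine hE'.prod_fiberwise fun n => ?_
  rw [sum_congr rfl fun k hk => (if_pos ((hmem n k).1 hk)).symm]
  exact hasSum_sum_of_ne_finset_zero fun k hk => if_neg (mt (hmem n k).2 hk)

lemma analyticOnNhd_tsum_mul_pow {a : ℕ → ℝ} {R : ℝ}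
    (ha : ∀ r, |r| < R → Summable fun n => a n * r ^ n) :
    AnalyticOnNhd ℝ (fun r => ∑' n, a n * r ^ n) (Metric.ball 0 R) := by
  set p := FormalMultilinearSeries.ofScalars ℝ a with hp
  have hradius : ENNReal.ofReal R ≤ p.radius := by
    refine ENNReal.le_of_forall_nnreal_lt fun r hr => p.le_radius_of_summable ?_
    have hrR : |(r : ℝ)| < R := by
      rw [NNReal.abs_eq]
      exact (ENNReal.coe_lt_ofReal ..).1 hr
    refine (ha r hrR).abs.congr fun n => ?_
    rw [hp, FormalMultilinearSeries.ofScalars_norm, abs_mul, abs_pow, NNReal.abs_eq,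
      Real.norm_eq_abs]
  have hsum : (fun r => ∑' n, a n * r ^ n) = p.sum := by
    ext r
    simp [FormalMultilinearSeries.sum, hp, mul_comm]
  intro r hr
  have hr' : r ∈ Metric.eball 0 p.radius := by
    refine Metric.eball_subset_eball hradius ?_
    rwa [Metric.eball_ofReal]
  rw [hsum]
  exact (p.hasFPowerSeriesOnBall (pos_of_gt hr')).analyticAt_of_mem hr'

lemma hasSum_mul_pow_of_eventually {a : ℕ → ℝ} {f : ℝ → ℝ} {R : ℝ}
    (ha : ∀ r, |r| < R → Summable fun n => a n * r ^ n)
    (hf : AnalyticOnNhd ℝ f (Metric.ball 0 R))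
    (h : ∀ᶠ r in 𝓝 0, HasSum (fun n => a n * r ^ n) (f r)) {r : ℝ} (hr : |r| < R) :
    HasSum (fun n => a n * r ^ n) (f r) := by
  have hEq : Set.EqOn (fun r => ∑' n, a n * r ^ n) f (Metric.ball 0 R) :=
    (analyticOnNhd_tsum_mul_pow ha).eqOn_of_preconnected_of_eventuallyEq hf
      (convex_ball 0 R).isPreconnected (Metric.mem_ball_self ((abs_nonneg r).trans_lt hr))
      (h.mono fun r hr => hr.tsum_eq)
  rw [← hEq (by simpa using hr)]
  exact (ha r hr).hasSum

end Series

section Operator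

/-- The ultraspherical differential operator
`P ↦ (1 - X²) P'' - (2α + 2) X P' + ν (ν + 2α + 1) P`, whose kernel for `ν = n` contains the
ultraspherical polynomial of degree `n`. -/
noncomputable def ultrasphericalOp (α ν : ℝ) : ℝ[X] →ₗ[ℝ] ℝ[X] :=
  LinearMap.mulLeft ℝ (1 - X ^ 2) ∘ₗ derivative ∘ₗ derivative -
    LinearMap.mulLeft ℝ (C (2 * α + 2) * X) ∘ₗ derivative +
    LinearMap.mulLeft ℝ (C (ν * (ν + 2 * α + 1)))

lemma ultrasphericalOp_apply (α ν : ℝ) (P : ℝ[X]) :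
    ultrasphericalOp α ν P = (1 - X ^ 2) * derivative (derivative P) -
      C (2 * α + 2) * X * derivative P + C (ν * (ν + 2 * α + 1)) * P := rfl

lemma eval_ultrasphericalOp (α ν : ℝ) (P : ℝ[X]) (x : ℝ) :
    (ultrasphericalOp α ν P).eval x = (1 - x ^ 2) * (derivative (derivative P)).eval x -
      (2 * α + 2) * x * (derivative P).eval x + ν * (ν + 2 * α + 1) * P.eval x := by
  simp [ultrasphericalOp_apply]

lemma derivative_ultrasphericalOp (α ν : ℝ) (P : ℝ[X]) :
    derivative (ultrasphericalOp α ν P) = ultrasphericalOp (α + 1) (ν - 1) (derivative P) := by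
  refine Polynomial.funext fun x => ?_
  simp [ultrasphericalOp_apply]
  ring

lemma iterate_derivative_ultrasphericalOp (α ν : ℝ) (P : ℝ[X]) (j : ℕ) :
    derivative^[j] (ultrasphericalOp α ν P) =
      ultrasphericalOp (α + j) (ν - j) (derivative^[j] P) := by
  induction j with
  | zero => simp
  | succ j ih =>
    rw [Function.iterate_succ_apply', ih, derivative_ultrasphericalOp,
      Function.iterate_succ_apply', Nat.cast_succ, add_assoc, sub_sub]

lemma ultrasphericalOp_comp_neg_X (α ν : ℝ) (P : ℝ[X]) :
    ultrasphericalOp α ν (P.comp (-X)) = (ultrasphericalOp α ν P).comp (-X) := by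
  refine Polynomial.funext fun x => ?_
  simp [ultrasphericalOp_apply, derivative_comp]

variable {α ν : ℝ} {P Q : ℝ[X]}

-- At `x = 1` the leading coefficient vanishes, so the `j`-th derivative of the equation expresses
-- `P^(j+1)(1)` through `P^(j)(1)`.
lemma eq_zero_of_ultrasphericalOp_eq_zero (hα : -1 < α) (hP : ultrasphericalOp α ν P = 0)
    (hP1 : P.eval 1 = 0) : P = 0 := by
  have hderiv (j : ℕ) : (derivative^[j] P).eval 1 = 0 := by
    induction j with
    | zero => simpa using hP1
    | succ j ih =>
      have h := iterate_derivative_ultrasphericalOp α ν P j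
      rw [hP, iterate_derivative_zero] at h
      have h1 := congrArg (eval 1) h
      rw [eval_ultrasphericalOp, ih, ← Function.iterate_succ_apply' (⇑derivative)] at h1
      have hne : 2 * (α + j) + 2 ≠ 0 := by
        have : (0 : ℝ) ≤ j := j.cast_nonneg
        linarith
      simpa [hne] using h1
  refine eq_zero_of_hasseDeriv_eq_zero P 1 fun k => ?_
  have h := congrArg (eval 1) (congrFun (factorial_smul_hasseDeriv (R := ℝ) k) P)
  rw [hderiv k] at h
  simpa [Nat.factorial_ne_zero] using h

lemma eval_one_smul_eq_of_ultrasphericalOp_eq_zero (hα : -1 < α)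
    (hP : ultrasphericalOp α ν P = 0) (hQ : ultrasphericalOp α ν Q = 0) :
    Q.eval 1 • P = P.eval 1 • Q := by
  rw [← sub_eq_zero]
  refine eq_zero_of_ultrasphericalOp_eq_zero (ν := ν) hα ?_ ?_
  · rw [map_sub, map_smul, map_smul, hP, hQ, smul_zero, smul_zero, sub_zero]
  · simp [mul_comm]

lemma sq_eval_neg_one_of_ultrasphericalOp_eq_zero (hα : -1 < α)
    (hP : ultrasphericalOp α ν P = 0) : P.eval (-1) ^ 2 = P.eval 1 ^ 2 := by
  have hPneg : ultrasphericalOp α ν (P.comp (-X)) = 0 := by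
    rw [ultrasphericalOp_comp_neg_X, hP, zero_comp]
  have h := congrArg (eval (-1)) (eval_one_smul_eq_of_ultrasphericalOp_eq_zero hα hP hPneg)
  simp only [eval_smul, eval_comp, eval_neg, eval_X, neg_neg, smul_eq_mul] at h
  linarith

/-- The Sonin function `ν (ν + 2α + 1) P² + (1 - X²) P'²`: it dominates a multiple of `P²` on
`[-1, 1]`, with equality at the endpoints, and is monotone on `[0, 1]` if `P` is in the kernel of
`ultrasphericalOp α ν`. -/
noncomputable def sonin (α ν : ℝ) (P : ℝ[X]) : ℝ[X] :=
  C (ν * (ν + 2 * α + 1)) * P ^ 2 + (1 - X ^ 2) * derivative P ^ 2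

lemma eval_sonin (α ν : ℝ) (P : ℝ[X]) (x : ℝ) : (sonin α ν P).eval x =
    ν * (ν + 2 * α + 1) * P.eval x ^ 2 + (1 - x ^ 2) * (derivative P).eval x ^ 2 := by
  simp [sonin]

lemma derivative_sonin (hP : ultrasphericalOp α ν P = 0) :
    derivative (sonin α ν P) = C (4 * α + 2) * X * derivative P ^ 2 := by
  have h : derivative (sonin α ν P) =
      C (4 * α + 2) * X * derivative P ^ 2 + 2 * derivative P * ultrasphericalOp α ν P := by
    refine Polynomial.funext fun x => ?_
    simp [sonin, ultrasphericalOp_apply, derivative_pow]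
    ring
  rw [h, hP, mul_zero, add_zero]

lemma monotoneOn_sonin (hα : -(1 / 2) ≤ α) (hP : ultrasphericalOp α ν P = 0) :
    MonotoneOn (fun x => (sonin α ν P).eval x) (Set.Ici 0) := by
  refine monotoneOn_of_deriv_nonneg (convex_Ici 0) (sonin α ν P).continuous.continuousOn
    (sonin α ν P).differentiable.differentiableOn fun x hx => ?_
  rw [interior_Ici] at hx
  rw [Polynomial.deriv, derivative_sonin hP]
  simp only [eval_mul, eval_C, eval_X, eval_pow]
  have hx0 : 0 ≤ x := (Set.mem_Ioi.1 hx).le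
  have hα' : 0 ≤ 4 * α + 2 := by linarith
  positivity

lemma sq_eval_le_sq_eval_one_of_nonneg (hα : -(1 / 2) ≤ α) (hν : 0 < ν)
    (hP : ultrasphericalOp α ν P = 0) {s : ℝ} (hs : s ∈ Set.Icc 0 1) :
    P.eval s ^ 2 ≤ P.eval 1 ^ 2 := by
  have hpos : 0 < ν * (ν + 2 * α + 1) := mul_pos hν (by linarith)
  have hmono := monotoneOn_sonin hα hP hs.1 (Set.mem_Ici.2 zero_le_one) hs.2
  simp only [eval_sonin] at hmono
  have hs2 : 0 ≤ 1 - s ^ 2 := by nlinarith [hs.1, hs.2]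
  refine le_of_mul_le_mul_left ?_ hpos
  nlinarith [mul_nonneg hs2 (sq_nonneg ((derivative P).eval s))]

lemma abs_eval_le_abs_eval_one (hα : -(1 / 2) ≤ α) (hν : 0 < ν)
    (hP : ultrasphericalOp α ν P = 0) {s : ℝ} (hs : s ∈ Set.Icc (-1) 1) :
    |P.eval s| ≤ |P.eval 1| := by
  rw [← sq_le_sq]
  rcases le_total 0 s with h0 | h0
  · exact sq_eval_le_sq_eval_one_of_nonneg hα hν hP ⟨h0, hs.2⟩
  · have hPneg : ultrasphericalOp α ν (P.comp (-X)) = 0 := by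
      rw [ultrasphericalOp_comp_neg_X, hP, zero_comp]
    have h := sq_eval_le_sq_eval_one_of_nonneg hα hν hPneg (s := -s)
      ⟨by linarith, by linarith [hs.1]⟩
    simp only [eval_comp, eval_neg, eval_X, neg_neg] at h
    exact h.trans_eq (sq_eval_neg_one_of_ultrasphericalOp_eq_zero (by linarith) hP)

end Operator

section ProductFormula

variable {α ν : ℝ}

lemma ultrasphericalOp_one_sub_X_sq_pow_mul_comp (α ν y : ℝ) (k : ℕ) (P : ℝ[X]) :
    ultrasphericalOp α ν ((1 - X ^ 2) ^ k * P.comp (C y * X)) =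
      (1 - X ^ 2) ^ k * (ultrasphericalOp (α + 2 * k) (ν - 2 * k) P).comp (C y * X) +
        C (4 * k * (α + k)) * ((1 - X ^ 2) ^ (k - 1) * P.comp (C y * X)) -
        C (1 - y ^ 2) * ((1 - X ^ 2) ^ k * (derivative (derivative P)).comp (C y * X)) := by
  refine Polynomial.funext fun x => ?_
  rcases k with _ | _ | k
  · simp [ultrasphericalOp_apply, derivative_comp]
    ring
  · simp [ultrasphericalOp_apply, derivative_comp]
    ring
  · simp [ultrasphericalOp_apply, derivative_comp, derivative_pow]
    ring

/-- The coefficients of the expansion of `P(x) P(y)` along the even derivatives of `P` at `xy`. -/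
noncomputable def productCoeff (α : ℝ) (k : ℕ) : ℝ := (4 ^ k * poch (α + 1) k * k !)⁻¹

lemma productCoeff_succ_mul (hα : -1 < α) (k : ℕ) :
    productCoeff α (k + 1) * (4 * (k + 1) * (α + 1 + k)) = productCoeff α k := by
  have hpoch := (poch_pos (show 0 < α + 1 by linarith) k).ne'
  have hne : α + 1 + k ≠ 0 := by
    have : (0 : ℝ) ≤ k := k.cast_nonneg
    linarith
  rw [productCoeff, productCoeff, poch_succ, Nat.factorial_succ, pow_succ]
  push_cast
  field_simp

/-- The right-hand side of the product formula as a polynomial in `x`, truncated after `N` terms. -/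
noncomputable def productExpansion (α y : ℝ) (P : ℝ[X]) (N : ℕ) : ℝ[X] :=
  ∑ k ∈ range N, (productCoeff α k * (1 - y ^ 2) ^ k) •
    ((1 - X ^ 2) ^ k * (derivative^[2 * k] P).comp (C y * X))

lemma eval_productExpansion (α x y : ℝ) (P : ℝ[X]) (N : ℕ) :
    (productExpansion α y P N).eval x = ∑ k ∈ range N, productCoeff α k *
      ((1 - x ^ 2) * (1 - y ^ 2)) ^ k * (derivative^[2 * k] P).eval (x * y) := by
  rw [productExpansion, eval_finsetSum]
  refine sum_congr rfl fun k _ => ?_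
  simp [mul_pow, mul_comm y x]
  ring

-- Applying the operator to the `k`-th summand produces two terms that telescope.
lemma ultrasphericalOp_productExpansion (hα : -1 < α) {P : ℝ[X]}
    (hP : ultrasphericalOp α ν P = 0) (y : ℝ) (N : ℕ) :
    ultrasphericalOp α ν (productExpansion α y P (N + 1)) =
      -((productCoeff α N * (1 - y ^ 2) ^ (N + 1)) •
        ((1 - X ^ 2) ^ N * (derivative^[2 * (N + 1)] P).comp (C y * X))) := by
  have hderiv (k : ℕ) :
      ultrasphericalOp (α + 2 * k) (ν - 2 * k) (derivative^[2 * k] P) = 0 := by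
    have h := iterate_derivative_ultrasphericalOp α ν P (2 * k)
    rw [hP, iterate_derivative_zero] at h
    exact_mod_cast h.symm
  have hterm (k : ℕ) :
      ultrasphericalOp α ν ((1 - X ^ 2) ^ k * (derivative^[2 * k] P).comp (C y * X)) =
        C (4 * k * (α + k)) * ((1 - X ^ 2) ^ (k - 1) * (derivative^[2 * k] P).comp (C y * X)) -
          C (1 - y ^ 2) * ((1 - X ^ 2) ^ k * (derivative^[2 * (k + 1)] P).comp (C y * X)) := by
    rw [ultrasphericalOp_one_sub_X_sq_pow_mul_comp, hderiv, zero_comp, mul_zero, zero_add,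
      ← Function.iterate_succ_apply' (⇑derivative), ← Function.iterate_succ_apply' (⇑derivative)]
    rfl
  induction N with
  | zero =>
    rw [productExpansion, sum_range_one, map_smul, hterm 0]
    simp [smul_eq_C_mul]
    ring
  | succ N ih =>
    have hcoeff : C (productCoeff α N) =
        C (productCoeff α (N + 1)) * C (4 * ((N + 1 : ℕ) : ℝ) * (α + (N + 1 : ℕ))) := by
      rw [← C_mul, ← productCoeff_succ_mul hα N]
      push_cast
      ring_nf
    rw [productExpansion, sum_range_succ, map_add, ← productExpansion, ih, map_smul,
      hterm (N + 1)]
    simp only [smul_eq_C_mul, C_mul, hcoeff, Nat.add_sub_cancel, pow_succ (1 - y ^ 2)]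
    ring

lemma eval_mul_eval_eq_sum (hα : -1 < α) {P : ℝ[X]} (hP : ultrasphericalOp α ν P = 0) {N : ℕ}
    (hN : P.natDegree < 2 * (N + 1)) (x y : ℝ) :
    P.eval x * P.eval y = P.eval 1 * ∑ k ∈ range (N + 1), productCoeff α k *
      ((1 - x ^ 2) * (1 - y ^ 2)) ^ k * (derivative^[2 * k] P).eval (x * y) := by
  have hOp : ultrasphericalOp α ν (productExpansion α y P (N + 1)) = 0 := by
    rw [ultrasphericalOp_productExpansion hα hP, iterate_derivative_eq_zero hN]
    simp
  have hone : (productExpansion α y P (N + 1)).eval 1 = P.eval y := by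
    rw [eval_productExpansion, sum_range_succ']
    simp [productCoeff, poch_zero]
  have h := congrArg (eval x) (eval_one_smul_eq_of_ultrasphericalOp_eq_zero hα hP hOp)
  rw [hone, eval_smul, eval_smul, eval_productExpansion, smul_eq_mul, smul_eq_mul] at h
  rw [← h, mul_comm]

end ProductFormula

section Ultraspherical

/-- The ultraspherical polynomial of degree `n` normalized to take the value `1` at `1`, i.e.
`P_n^{α,α}` divided by `(α + 1)_n / n!`. -/
noncomputable def ultraspherical (α : ℝ) (n : ℕ) : ℝ[X] :=
  ∑ k ∈ range (n + 1), (poch (-(n : ℝ)) k * poch (n + α + α + 1) k / (poch (α + 1) k * k !)) •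
    (C (1 / 2) * (1 - X)) ^ k

lemma eval_ultraspherical (α : ℝ) (n : ℕ) (x : ℝ) : (ultraspherical α n).eval x =
    ∑ k ∈ range (n + 1),
      poch (-(n : ℝ)) k * poch (n + α + α + 1) k / (poch (α + 1) k * k !) * ((1 - x) / 2) ^ k := by
  rw [ultraspherical, eval_finsetSum]
  refine sum_congr rfl fun k _ => ?_
  simp [← div_eq_inv_mul]

lemma jacobiP_self_eq (α : ℝ) (n : ℕ) (x : ℝ) :
    jacobiP α α n x = poch (α + 1) n / n ! * (ultraspherical α n).eval x := by
  rw [eval_ultraspherical, jacobiP]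

lemma eval_one_ultraspherical (α : ℝ) (n : ℕ) : (ultraspherical α n).eval 1 = 1 := by
  rw [eval_ultraspherical, sum_range_succ']
  simp [poch_zero]

lemma natDegree_ultraspherical_le (α : ℝ) (n : ℕ) : (ultraspherical α n).natDegree ≤ n := by
  refine natDegree_sum_le_of_forall_le _ _ fun k hk => (natDegree_smul_le _ _).trans ?_
  have hk' : k ≤ n := mem_range_succ_iff.1 hk
  have hlin : (C (1 / 2) * (1 - X) : ℝ[X]).natDegree ≤ 1 := by compute_degree
  calc ((C (1 / 2) * (1 - X) : ℝ[X]) ^ k).natDegree ≤ k * 1 := natDegree_pow_le_of_le k hlin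
    _ ≤ n := by rwa [mul_one]

lemma ultrasphericalOp_half_one_sub_X_pow (α ν : ℝ) (k : ℕ) :
    ultrasphericalOp α ν ((C (1 / 2) * (1 - X)) ^ k) =
      C (k * (k + α)) * (C (1 / 2) * (1 - X)) ^ (k - 1) +
        C ((ν - k) * (ν + α + α + 1 + k)) * (C (1 / 2) * (1 - X)) ^ k := by
  refine Polynomial.funext fun x => ?_
  rcases k with _ | _ | k
  · simp only [ultrasphericalOp_apply, pow_zero, derivative_one, map_zero, mul_zero, sub_zero,
      zero_add, Nat.cast_zero, zero_mul, mul_one, eval_C, add_zero]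
    ring
  · simp [ultrasphericalOp_apply]
    ring
  · simp [ultrasphericalOp_apply, derivative_pow]
    ring

lemma ultrasphericalOp_ultraspherical {α : ℝ} (hα : -1 < α) (n : ℕ) :
    ultrasphericalOp α n (ultraspherical α n) = 0 := by
  simp only [ultraspherical, map_sum, map_smul, ultrasphericalOp_half_one_sub_X_pow, smul_add]
  rw [sum_add_distrib, sum_range_succ', sum_range_succ _ n]
  simp only [Nat.cast_zero, zero_mul, C_0, smul_zero, add_zero, sub_self, ← sum_add_distrib]
  refine sum_eq_zero fun k _ => ?_
  have hpoch := (poch_pos (show 0 < α + 1 by linarith) k).ne'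
  have hne : α + 1 + k ≠ 0 := by
    have : (0 : ℝ) ≤ k := k.cast_nonneg
    linarith
  simp only [smul_eq_C_mul, ← mul_assoc, ← C_mul, Nat.add_sub_cancel, ← add_mul, ← C_add]
  rw [poch_succ, poch_succ, poch_succ, Nat.factorial_succ]
  convert zero_mul _
  rw [← C_0]
  congr 1
  push_cast
  field_simp
  ring

lemma abs_eval_ultraspherical_le_one {α : ℝ} (hα : -(1 / 2) ≤ α) (n : ℕ) {s : ℝ}
    (hs : s ∈ Set.Icc (-1) 1) : |(ultraspherical α n).eval s| ≤ 1 := by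
  rcases n.eq_zero_or_pos with rfl | hn
  · simp [ultraspherical, poch_zero]
  · simpa [eval_one_ultraspherical] using abs_eval_le_abs_eval_one hα (Nat.cast_pos.2 hn)
      (ultrasphericalOp_ultraspherical (by linarith) n) hs

lemma derivative_ultraspherical_succ {α : ℝ} (hα : -1 < α) (n : ℕ) :
    derivative (ultraspherical α (n + 1)) =
      ((n + 1) * (n + 2 * α + 2) / (2 * (α + 1))) • ultraspherical (α + 1) n := by
  rw [ultraspherical, sum_range_succ', derivative_add, derivative_sum, ultraspherical, smul_sum]
  simp only [pow_zero, derivative_smul, derivative_one, smul_zero, add_zero]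
  refine sum_congr rfl fun k _ => ?_
  have hderiv : derivative ((C (1 / 2) * (1 - X)) ^ (k + 1) : ℝ[X]) =
      C (-((k : ℝ) + 1) / 2) * (C (1 / 2) * (1 - X)) ^ k := by
    refine Polynomial.funext fun x => ?_
    simp [derivative_pow]
    ring
  have hα1 : α + 1 ≠ 0 := by linarith
  have hpoch := (poch_pos (show 0 < α + 1 + 1 by linarith) k).ne'
  rw [hderiv, smul_smul, ← smul_eq_C_mul, smul_smul, poch_succ_left, poch_succ_left,
    poch_succ_left, Nat.factorial_succ]
  congr 1
  push_cast
  rw [show -((n : ℝ) + 1) + 1 = -n by ring,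
    show (n : ℝ) + 1 + α + α + 1 + 1 = n + (α + 1) + (α + 1) + 1 by ring]
  field_simp
  ring

lemma iterate_derivative_ultraspherical {α : ℝ} (hα : -1 < α) (j m : ℕ) :
    derivative^[j] (ultraspherical α (j + m)) =
      ((j + m)! / m ! * poch (j + m + 2 * α + 1) j / (2 ^ j * poch (α + 1) j)) •
        ultraspherical (α + j) m := by
  induction j generalizing α with
  | zero => simp [poch_zero, Nat.factorial_ne_zero]
  | succ j ih =>
    have hα1 : α + 1 ≠ 0 := by linarith
    have hpoch := (poch_pos (show 0 < α + 1 + 1 by linarith) j).ne'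
    rw [Function.iterate_succ_apply, show j + 1 + m = (j + m) + 1 by ring,
      derivative_ultraspherical_succ hα, iterate_derivative_smul, ih (by linarith), smul_smul,
      poch_succ_left (α + 1), poch_succ_left, Nat.factorial_succ]
    push_cast
    rw [show α + 1 + (j : ℝ) = α + (j + 1) by ring,
      show (j : ℝ) + 1 + m + 2 * α + 1 + 1 = j + m + 2 * (α + 1) + 1 by ring]
    congr 1
    field_simp
    ring

end Ultraspherical

section ZonalWeight

/-- The weight of the normalized ultraspherical polynomial of degree `n` and parameter
`α = (c - 1) / 2` in the Poisson kernel. For `c = d - 2` it is the dimension of the space of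
spherical harmonics of degree `n` on `ℝᵈ`. -/
noncomputable def zonalWeight (c : ℝ) (n : ℕ) : ℝ := (2 * n + c) / c * (poch c n / n !)

variable {c r : ℝ}

lemma zonalWeight_pos (hc : 0 < c) (n : ℕ) : 0 < zonalWeight c n := by
  have hpoch := poch_pos hc n
  rw [zonalWeight]
  positivity

lemma zonalWeight_add (hc : 0 < c) (k p : ℕ) :
    zonalWeight c (k + p) * ((k + p)! / p !) * poch (k + p + c) k =
      4 ^ k * poch (c / 2 + 1) k * poch (c / 2 + 1 / 2) k * zonalWeight (c + 2 * k) p := by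
  have hshift : poch (c / 2 + 1) k * c = poch (c / 2) k * (c + 2 * k) := by
    linear_combination 2 * ((poch_succ_left (c / 2) k).symm.trans (poch_succ (c / 2) k))
  have hsplit : poch c (k + p) * poch (k + p + c) k =
      4 ^ k * poch (c / 2) k * poch (c / 2 + 1 / 2) k * poch (c + 2 * k) p := by
    have h := (poch_add c (k + p) k).symm.trans
      ((congrArg (poch c) (by ring)).trans (poch_add c (2 * k) p))
    rw [poch_two_mul] at h
    push_cast at h
    rwa [add_comm c (k + p)] at h
  have hck : c + 2 * k ≠ 0 := by positivity
  rw [zonalWeight, zonalWeight]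
  generalize poch (c / 2 + 1) k = u, poch (c / 2 + 1 / 2) k = v at *
  push_cast
  field_simp
  linear_combination (2 * (k + p : ℝ) + c) * (c + 2 * k) * hsplit -
    (2 * (k + p : ℝ) + c) * 4 ^ k * v * poch (c + 2 * k) p * hshift

lemma hasSum_zonalWeight_mul_pow (hc : 0 < c) (hr : |r| < 1) :
    HasSum (fun n => zonalWeight c n * r ^ n) ((1 + r) * (1 - r) ^ (-(c + 1))) := by
  have hr1 : 0 < 1 - r := by linarith [(abs_lt.1 hr).2]
  have hlin : HasSum (fun n : ℕ => 2 * n / c * (poch c n / n !) * r ^ n)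
      (2 * r * (1 - r) ^ (-(c + 1))) := by
    rw [← hasSum_nat_add_iff' 1]
    simp only [sum_range_one, Nat.cast_zero, mul_zero, zero_div, zero_mul, sub_zero]
    refine ((hasSum_poch_div_factorial_mul_pow (c + 1) hr).mul_left (2 * r)).congr_fun fun n => ?_
    rw [poch_succ_left, Nat.factorial_succ]
    push_cast
    field_simp
    ring
  have hadd := hlin.add (hasSum_poch_div_factorial_mul_pow c hr)
  rw [show -c = -(c + 1) + 1 by ring, Real.rpow_add_one hr1.ne'] at hadd
  convert hadd using 1
  · ext n
    rw [zonalWeight]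
    field_simp
  · ring

lemma summable_abs_zonalWeight_mul (hc : 0 < c) {b : ℕ → ℝ} (hb : ∀ n, |b n| ≤ 1)
    (hr : |r| < 1) : Summable fun n => |zonalWeight c n * b n * r ^ n| := by
  have hsum := (hasSum_zonalWeight_mul_pow (r := |r|) hc (by rwa [abs_abs])).summable
  refine hsum.of_nonneg_of_le (fun n => abs_nonneg _) fun n => ?_
  rw [abs_mul, abs_mul, abs_of_pos (zonalWeight_pos hc n), abs_pow]
  gcongr
  exact mul_le_of_le_one_right (zonalWeight_pos hc n).le (hb n)

lemma hasSum_sum_range_div_zonalWeight (hc : 0 < c) (hr : |r| < 1) {d : ℕ} (hd : 0 < d)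
    {A g : ℕ → ℝ} {b : ℕ → ℕ → ℝ} {T : ℝ} (hb : ∀ k m, |b k m| ≤ 1)
    (hA : Summable fun k => |A k| / (1 - |r|) ^ (2 * d * k))
    (hg : ∀ k : ℕ, HasSum (fun m => zonalWeight (c + 2 * d * k) m * b k m * r ^ m) (g k))
    (hT : HasSum (fun k => A k * g k) T) :
    HasSum (fun n => ∑ k ∈ range (n / d + 1), A k *
      (zonalWeight (c + 2 * d * k) (n - d * k) * b k (n - d * k) * r ^ (n - d * k))) T := by
  have hck (k : ℕ) : 0 < c + 2 * d * k := by positivity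
  have hr1 : 0 < 1 - |r| := by linarith
  have hmajorant (k : ℕ) := (hasSum_zonalWeight_mul_pow (r := |r|) (hck k)
    (by rwa [abs_abs])).mul_left |A k|
  refine hasSum_sum_range_div hd
    (F := fun k m => A k * (zonalWeight (c + 2 * d * k) m * b k m * r ^ m))
    (hasSum_prod_of_norm_le (fun k m => ?_) hmajorant ?_ (fun k => (hg k).mul_left (A k)) hT)
  · have hweight := (zonalWeight_pos (hck k) m).le
    rw [Real.norm_eq_abs, abs_mul, abs_mul, abs_mul, abs_of_nonneg hweight, abs_pow]
    gcongr
    exact mul_le_of_le_one_right hweight (hb k m)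
  · refine (hA.mul_left ((1 + |r|) * (1 - |r|) ^ (-(c + 1)))).congr fun k => ?_
    rw [show -(c + 2 * d * k + 1) = -(c + 1) - (2 * d * k : ℕ) by push_cast; ring,
      Real.rpow_sub_natCast hr1.ne']
    ring

end ZonalWeight

section PoissonKernel

/-- The Poisson kernel `(1 - r²) / (1 - 2rs + r²)^(α + 3/2)` of the ultraspherical expansion. -/
noncomputable def ultrasphericalPoissonKernel (α s r : ℝ) : ℝ :=
  (1 - r ^ 2) * (1 - 2 * r * s + r ^ 2) ^ (-(α + 3 / 2))

variable {α r s : ℝ}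

lemma sq_one_sub_abs_le (hs : s ∈ Set.Icc (-1) 1) : (1 - |r|) ^ 2 ≤ 1 - 2 * r * s + r ^ 2 := by
  have h : r * s ≤ |r| := (le_abs_self _).trans (by
    rw [abs_mul]
    exact mul_le_of_le_one_right (abs_nonneg r) (abs_le.2 hs))
  nlinarith [sq_abs r]

lemma one_sub_two_mul_add_sq_pos (hs : s ∈ Set.Icc (-1) 1) (hr : |r| < 1) :
    0 < 1 - 2 * r * s + r ^ 2 :=
  (pow_pos (sub_pos.2 hr) 2).trans_le (sq_one_sub_abs_le hs)

lemma analyticOnNhd_ultrasphericalPoissonKernel (α : ℝ) (hs : s ∈ Set.Icc (-1) 1) :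
    AnalyticOnNhd ℝ (ultrasphericalPoissonKernel α s) (Metric.ball 0 1) := by
  intro r hr
  have hpos := one_sub_two_mul_add_sq_pos hs (by simpa using hr)
  have hrpow : AnalyticAt ℝ (fun u : ℝ => u ^ (-(α + 3 / 2))) (1 - 2 * r * s + r ^ 2) :=
    (Real.contDiffAt_rpow_const_of_ne hpos.ne').analyticAt
  have hbase : AnalyticAt ℝ (fun r => 1 - 2 * r * s + r ^ 2) r := by fun_prop
  have hfactor : AnalyticAt ℝ (fun r : ℝ => 1 - r ^ 2) r := by fun_prop
  exact hfactor.mul (hrpow.comp_of_eq hbase rfl)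

lemma zonalWeight_mul_eval_ultraspherical (hα : -(1 / 2) < α) (n : ℕ) (s : ℝ) :
    zonalWeight (2 * α + 1) n * (ultraspherical α n).eval s =
      ∑ k ∈ range (n + 1), poch (α + 3 / 2) k / k ! * (-(2 * (1 - s))) ^ k *
        zonalWeight (2 * α + 1 + 2 * k) (n - k) := by
  rw [eval_ultraspherical, mul_sum]
  refine sum_congr rfl fun k hk => ?_
  obtain ⟨p, rfl⟩ := Nat.exists_eq_add_of_le (mem_range_succ_iff.1 hk)
  have hpoch := (poch_pos (show 0 < α + 1 by linarith) k).ne'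
  have hneg := poch_neg_natCast_add k p
  have hadd := zonalWeight_add (show 0 < 2 * α + 1 by linarith) k p
  rw [show (2 * α + 1) / 2 + 1 = α + 3 / 2 by ring,
    show (2 * α + 1) / 2 + 1 / 2 = α + 1 by ring] at hadd
  rw [Nat.add_sub_cancel_left, eq_div_of_mul_eq (by positivity) hneg,
    show ((k + p : ℕ) : ℝ) + α + α + 1 = k + p + (2 * α + 1) by push_cast; ring,
    show -(2 * (1 - s)) = -1 * 4 * ((1 - s) / 2) by ring, mul_pow, mul_pow]
  field_simp at hadd ⊢
  linear_combination ((1 - s) / 2) ^ k * hadd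

lemma ultrasphericalPoissonKernel_eq_mul_rpow (α : ℝ) (hr : r < 1)
    (hz : -(2 * (1 - s)) * r / (1 - r) ^ 2 ≤ 1) :
    ultrasphericalPoissonKernel α s r = (1 + r) * (1 - r) ^ (-(2 * α + 2)) *
      (1 - -(2 * (1 - s)) * r / (1 - r) ^ 2) ^ (-(α + 3 / 2)) := by
  have hr1 : 0 < 1 - r := sub_pos.2 hr
  have hfactor : 1 - 2 * r * s + r ^ 2 =
      (1 - r) ^ 2 * (1 - -(2 * (1 - s)) * r / (1 - r) ^ 2) := by
    field_simp
    ring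
  have hrpow : ((1 - r) ^ 2) ^ (-(α + 3 / 2)) = (1 - r) ^ (-(2 * α + 2)) / (1 - r) := by
    rw [← Real.rpow_natCast, ← Real.rpow_mul hr1.le, ← Real.rpow_sub_one hr1.ne']
    congr 1
    push_cast
    ring
  rw [ultrasphericalPoissonKernel, hfactor, Real.mul_rpow (by positivity) (sub_nonneg.2 hz), hrpow]
  field_simp
  ring

-- For fixed `k` the sum over `n` of the `k`-th terms of `zonalWeight_mul_eval_ultraspherical` is a
-- binomial series; the double series converges absolutely only for small `r`.
lemma hasSum_ultrasphericalPoissonKernel_of_small (hα : -(1 / 2) < α) (hr : |r| < 1)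
    (hsmall : 2 * |1 - s| * |r| < (1 - |r|) ^ 2) :
    HasSum (fun n => zonalWeight (2 * α + 1) n * (ultraspherical α n).eval s * r ^ n)
      (ultrasphericalPoissonKernel α s r) := by
  have hr1 : 0 < 1 - r := by linarith [(abs_lt.1 hr).2]
  have hr1' : 0 < 1 - |r| := by linarith
  have hc : 0 < 2 * α + 1 := by linarith
  have hlt {u : ℝ} (hu : 1 - |r| ≤ u) : |-(2 * (1 - s)) * r / u ^ 2| < 1 := by
    have hu0 : 0 < u := by linarith
    rw [abs_div, abs_mul, abs_neg, abs_mul, abs_two, abs_pow, abs_of_pos hu0,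
      div_lt_one (by positivity)]
    exact hsmall.trans_le (pow_le_pow_left₀ hr1'.le hu 2)
  have hA : Summable fun k => |poch (α + 3 / 2) k / k ! * (-(2 * (1 - s)) * r) ^ k| /
      (1 - |r|) ^ (2 * 1 * k) := by
    refine (hasSum_poch_div_factorial_mul_pow (α + 3 / 2) (hlt le_rfl)).summable.abs.congr
      fun k => ?_
    rw [div_pow, ← mul_div_assoc, abs_div, mul_one, pow_mul, abs_of_pos (a := (_ ^ 2) ^ k)]
    positivity
  have hT : HasSum (fun k : ℕ => poch (α + 3 / 2) k / k ! * (-(2 * (1 - s)) * r) ^ k *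
      ((1 + r) * (1 - r) ^ (-(2 * α + 1 + 2 * (1 : ℕ) * k + 1))))
      (ultrasphericalPoissonKernel α s r) := by
    have hz := hlt (sub_le_sub_left (le_abs_self r) 1)
    rw [ultrasphericalPoissonKernel_eq_mul_rpow α (by linarith) (le_of_abs_le hz.le)]
    refine ((hasSum_poch_div_factorial_mul_pow (α + 3 / 2) hz).mul_left _).congr_fun fun k => ?_
    rw [show -(2 * α + 1 + 2 * (1 : ℕ) * k + 1) = -(2 * α + 2) - (2 * k : ℕ) by push_cast; ring,
      Real.rpow_sub_natCast hr1.ne', div_pow, pow_mul]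
    ring
  refine (hasSum_sum_range_div_zonalWeight hc hr one_pos (b := fun _ _ => 1) (by simp) hA
    (fun k => ?_) hT).congr_fun fun n => ?_
  · simpa using hasSum_zonalWeight_mul_pow (c := 2 * α + 1 + 2 * (1 : ℕ) * k) (by positivity) hr
  · rw [zonalWeight_mul_eval_ultraspherical hα, sum_mul, Nat.div_one]
    refine sum_congr rfl fun k hk => ?_
    rw [← pow_mul_pow_sub r (mem_range_succ_iff.1 hk), mul_pow]
    simp only [Nat.cast_one, mul_one, one_mul]
    ring

lemma eventually_abs_lt_one_and_mul_abs_lt (K : ℝ) :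
    ∀ᶠ r : ℝ in 𝓝 0, |r| < 1 ∧ K * |r| < (1 - |r|) ^ 2 :=
  ((by fun_prop : Continuous fun r : ℝ => |r|).continuousAt.eventually_lt_const (by simp)).and
    ((by fun_prop : ContinuousAt (fun r : ℝ => K * |r|) 0).eventually_lt
      (by fun_prop : ContinuousAt (fun r : ℝ => (1 - |r|) ^ 2) 0) (by simp))

lemma hasSum_ultrasphericalPoissonKernel (hα : -(1 / 2) < α) (hs : s ∈ Set.Icc (-1) 1)
    (hr : |r| < 1) :
    HasSum (fun n => zonalWeight (2 * α + 1) n * (ultraspherical α n).eval s * r ^ n)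
      (ultrasphericalPoissonKernel α s r) := by
  refine hasSum_mul_pow_of_eventually (fun r hr => ?_)
    (analyticOnNhd_ultrasphericalPoissonKernel α hs) ?_ hr
  · exact (summable_abs_zonalWeight_mul (by linarith)
      (fun n => abs_eval_ultraspherical_le_one hα.le n hs) hr).of_abs
  · filter_upwards [eventually_abs_lt_one_and_mul_abs_lt (2 * |1 - s|)] with r hr
    exact hasSum_ultrasphericalPoissonKernel_of_small hα hr.1 hr.2

end PoissonKernel

section ProductKernel

/-- The kernel `∑ₙ zonalWeight (2α + 1) n Uₙ(x) Uₙ(y) rⁿ`, with `Uₙ` the normalized ultraspherical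
polynomial of parameter `α`, in closed form. -/
noncomputable def ultrasphericalProductKernel (α x y r : ℝ) : ℝ :=
  ultrasphericalPoissonKernel α (x * y) r * ₂F₁ ((2 * α + 3) / 4) ((2 * α + 5) / 4) (α + 1)
    (4 * ((1 - x ^ 2) * (1 - y ^ 2)) * r ^ 2 / (1 - 2 * r * (x * y) + r ^ 2) ^ 2)

variable {α r x y : ℝ}

lemma natCast_ne_neg_parameters (hα : -1 < α) (k : ℕ) :
    (k : ℝ) ≠ -((2 * α + 3) / 4) ∧ (k : ℝ) ≠ -((2 * α + 5) / 4) ∧ (k : ℝ) ≠ -(α + 1) := by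
  have hne {a : ℝ} (ha : 0 < a) : (k : ℝ) ≠ -a :=
    ((neg_neg_of_pos ha).trans_le k.cast_nonneg).ne'
  exact ⟨hne (by linarith), hne (by linarith), hne (by linarith)⟩

lemma abs_productKernel_argument_lt_one (hx : x ∈ Set.Ioo (-1) 1) (hy : y ∈ Set.Ioo (-1) 1)
    (hr : |r| < 1) :
    |4 * ((1 - x ^ 2) * (1 - y ^ 2)) * r ^ 2 / (1 - 2 * r * (x * y) + r ^ 2) ^ 2| < 1 := by
  have hx2 : 0 < 1 - x ^ 2 := by nlinarith [hx.1, hx.2]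
  have hy2 : 0 < 1 - y ^ 2 := by nlinarith [hy.1, hy.2]
  have hlt : |r| * (2 - x ^ 2 - y ^ 2) < 1 - 2 * r * (x * y) + r ^ 2 := by
    rcases abs_cases r with ⟨h, hr0⟩ | ⟨h, hr0⟩ <;> rw [h] at hr ⊢
    · nlinarith [mul_nonneg hr0 (sq_nonneg (x - y)), pow_pos (sub_pos.2 hr) 2]
    · nlinarith [mul_nonneg (neg_pos.2 hr0).le (sq_nonneg (x + y)), pow_pos (sub_pos.2 hr) 2]
  have h0 : 0 ≤ |r| * (2 - x ^ 2 - y ^ 2) := mul_nonneg (abs_nonneg r) (by linarith)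
  have hpos := h0.trans_lt hlt
  rw [abs_of_nonneg (by positivity), div_lt_one (by positivity)]
  calc 4 * ((1 - x ^ 2) * (1 - y ^ 2)) * r ^ 2
      ≤ (2 - x ^ 2 - y ^ 2) ^ 2 * r ^ 2 := by
        gcongr
        nlinarith [sq_nonneg (x ^ 2 - y ^ 2)]
    _ = (|r| * (2 - x ^ 2 - y ^ 2)) ^ 2 := by rw [mul_pow, sq_abs, mul_comm]
    _ < (1 - 2 * r * (x * y) + r ^ 2) ^ 2 := pow_lt_pow_left₀ hlt h0 two_ne_zero

lemma mul_mem_Icc_neg_one_one (hx : x ∈ Set.Ioo (-1) 1) (hy : y ∈ Set.Ioo (-1) 1) :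
    x * y ∈ Set.Icc (-1) 1 := by
  rw [Set.mem_Icc, ← abs_le, abs_mul]
  exact mul_le_one₀ (abs_lt.2 hx).le (abs_nonneg y) (abs_lt.2 hy).le

lemma analyticOnNhd_ultrasphericalProductKernel (hα : -1 < α) (hx : x ∈ Set.Ioo (-1) 1)
    (hy : y ∈ Set.Ioo (-1) 1) :
    AnalyticOnNhd ℝ (ultrasphericalProductKernel α x y) (Metric.ball 0 1) := by
  intro r hr
  have hr1 : |r| < 1 := by simpa using hr
  have hxy := mul_mem_Icc_neg_one_one hx hy
  have hpos := one_sub_two_mul_add_sq_pos hxy hr1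
  have hF := analyticAt_ordinaryHypergeometric (natCast_ne_neg_parameters hα)
    (abs_productKernel_argument_lt_one hx hy hr1)
  have hnum : AnalyticAt ℝ (fun r => 4 * ((1 - x ^ 2) * (1 - y ^ 2)) * r ^ 2) r := by fun_prop
  have hden : AnalyticAt ℝ (fun r => (1 - 2 * r * (x * y) + r ^ 2) ^ 2) r := by fun_prop
  exact (analyticOnNhd_ultrasphericalPoissonKernel α hxy r hr).mul
    (hF.comp_of_eq (hnum.div hden (by positivity)) rfl)

lemma zonalWeight_mul_eval_iterate_derivative (hα : -(1 / 2) < α) (j m : ℕ) (s : ℝ) :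
    zonalWeight (2 * α + 1) (j + m) * (derivative^[j] (ultraspherical α (j + m))).eval s =
      2 ^ j * poch (α + 3 / 2) j *
        (zonalWeight (2 * α + 1 + 2 * j) m * (ultraspherical (α + j) m).eval s) := by
  have hpoch := (poch_pos (show 0 < α + 1 by linarith) j).ne'
  have hadd := zonalWeight_add (show 0 < 2 * α + 1 by linarith) j m
  rw [show (2 * α + 1) / 2 + 1 = α + 3 / 2 by ring, ← add_assoc,
    show (2 * α + 1) / 2 + 1 / 2 = α + 1 by ring, show (4 : ℝ) = 2 * 2 by norm_num, mul_pow] at hadd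
  rw [iterate_derivative_ultraspherical (by linarith), eval_smul, smul_eq_mul]
  generalize poch (α + 3 / 2) j = u at *
  field_simp at hadd ⊢
  linear_combination (ultraspherical (α + j) m).eval s * hadd

lemma zonalWeight_mul_eval_mul_eval_ultraspherical (hα : -(1 / 2) < α) (n : ℕ) (x y : ℝ) :
    zonalWeight (2 * α + 1) n * ((ultraspherical α n).eval x * (ultraspherical α n).eval y) =
      ∑ k ∈ range (n / 2 + 1), poch ((2 * α + 3) / 4) k * poch ((2 * α + 5) / 4) k /
        (poch (α + 1) k * k !) * (4 * ((1 - x ^ 2) * (1 - y ^ 2))) ^ k *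
          (zonalWeight (2 * α + 1 + 2 * 2 * k) (n - 2 * k) *
            (ultraspherical (α + 2 * k) (n - 2 * k)).eval (x * y)) := by
  have hα1 : -1 < α := by linarith
  have hdeg : (ultraspherical α n).natDegree < 2 * (n / 2 + 1) :=
    (natDegree_ultraspherical_le α n).trans_lt (by lia)
  rw [eval_mul_eval_eq_sum hα1 (ultrasphericalOp_ultraspherical hα1 n) hdeg,
    eval_one_ultraspherical, one_mul, mul_sum]
  refine sum_congr rfl fun k hk => ?_
  obtain ⟨m, rfl⟩ : ∃ m, n = 2 * k + m :=
    Nat.exists_eq_add_of_le (by have := mem_range_succ_iff.1 hk; lia)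
  have hpoch := (poch_pos (show 0 < α + 1 by linarith) k).ne'
  have hderiv := zonalWeight_mul_eval_iterate_derivative hα (2 * k) m (x * y)
  rw [poch_two_mul, show (α + 3 / 2) / 2 = (2 * α + 3) / 4 by ring,
    show (2 * α + 3) / 4 + 1 / 2 = (2 * α + 5) / 4 by ring, Nat.cast_mul, Nat.cast_ofNat,
    ← mul_assoc 2 2, pow_mul, show (2 : ℝ) ^ 2 = 4 by norm_num] at hderiv
  rw [mul_left_comm, hderiv, productCoeff, Nat.add_sub_cancel_left, mul_pow 4]
  generalize poch ((2 * α + 3) / 4) k = u, poch ((2 * α + 5) / 4) k = v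
  field_simp

lemma summable_abs_ultrasphericalProduct (hα : -(1 / 2) < α) (hx : x ∈ Set.Ioo (-1) 1)
    (hy : y ∈ Set.Ioo (-1) 1) (hr : |r| < 1) :
    Summable fun n => |zonalWeight (2 * α + 1) n *
      ((ultraspherical α n).eval x * (ultraspherical α n).eval y) * r ^ n| := by
  refine summable_abs_zonalWeight_mul (by linarith) (fun n => ?_) hr
  rw [abs_mul]
  exact mul_le_one₀ (abs_eval_ultraspherical_le_one hα.le n (Set.Ioo_subset_Icc_self hx))
    (abs_nonneg _) (abs_eval_ultraspherical_le_one hα.le n (Set.Ioo_subset_Icc_self hy))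

lemma hasSum_mul_ultrasphericalPoissonKernel_add (hα : -1 < α) (hx : x ∈ Set.Ioo (-1) 1)
    (hy : y ∈ Set.Ioo (-1) 1) (hr : |r| < 1) :
    HasSum (fun k : ℕ => poch ((2 * α + 3) / 4) k * poch ((2 * α + 5) / 4) k /
      (poch (α + 1) k * k !) * (4 * ((1 - x ^ 2) * (1 - y ^ 2)) * r ^ 2) ^ k *
        ultrasphericalPoissonKernel (α + 2 * k) (x * y) r)
      (ultrasphericalProductKernel α x y r) := by
  have hD := one_sub_two_mul_add_sq_pos (mul_mem_Icc_neg_one_one hx hy) hr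
  refine ((hasSum_ordinaryHypergeometric (natCast_ne_neg_parameters hα)
    (abs_productKernel_argument_lt_one hx hy hr)).mul_left _).congr_fun fun k => ?_
  rw [ultrasphericalPoissonKernel, ultrasphericalPoissonKernel,
    show -(α + 2 * k + 3 / 2) = -(α + 3 / 2) - (2 * k : ℕ) by push_cast; ring,
    Real.rpow_sub_natCast hD.ne', div_pow, pow_mul]
  ring

lemma summable_majorant_ultrasphericalProductKernel (hα : -1 < α) (hx : x ∈ Set.Ioo (-1) 1)
    (hy : y ∈ Set.Ioo (-1) 1) (hr : |r| < 1) (hsmall : 2 * |r| < (1 - |r|) ^ 2) :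
    Summable fun k : ℕ => |poch ((2 * α + 3) / 4) k * poch ((2 * α + 5) / 4) k /
      (poch (α + 1) k * k !) * (4 * ((1 - x ^ 2) * (1 - y ^ 2)) * r ^ 2) ^ k| /
        (1 - |r|) ^ (2 * 2 * k) := by
  have hr1 : 0 < 1 - |r| := by linarith
  have hx2 : 0 ≤ 1 - x ^ 2 := by nlinarith [hx.1, hx.2]
  have hy2 : 0 ≤ 1 - y ^ 2 := by nlinarith [hy.1, hy.2]
  have hlt : |4 * ((1 - x ^ 2) * (1 - y ^ 2)) * r ^ 2 / (1 - |r|) ^ (2 * 2)| < 1 := by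
    rw [abs_of_nonneg (by positivity), div_lt_one (by positivity)]
    calc 4 * ((1 - x ^ 2) * (1 - y ^ 2)) * r ^ 2 ≤ 4 * 1 * r ^ 2 := by
          gcongr
          exact mul_le_one₀ (by linarith [sq_nonneg x]) hy2 (by linarith [sq_nonneg y])
      _ = (2 * |r|) ^ 2 := by rw [mul_pow, sq_abs]; ring
      _ < ((1 - |r|) ^ 2) ^ 2 := pow_lt_pow_left₀ hsmall (by positivity) two_ne_zero
      _ = (1 - |r|) ^ (2 * 2) := (pow_mul _ 2 2).symm
  refine (summable_abs_ordinaryHypergeometric (natCast_ne_neg_parameters hα) hlt).congr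
    fun k => ?_
  rw [div_pow, ← mul_div_assoc, abs_div, ← pow_mul, abs_of_pos (pow_pos hr1 _)]

lemma hasSum_ultrasphericalProductKernel_of_small (hα : -(1 / 2) < α) (hx : x ∈ Set.Ioo (-1) 1)
    (hy : y ∈ Set.Ioo (-1) 1) (hr : |r| < 1) (hsmall : 2 * |r| < (1 - |r|) ^ 2) :
    HasSum (fun n => zonalWeight (2 * α + 1) n *
      ((ultraspherical α n).eval x * (ultraspherical α n).eval y) * r ^ n)
      (ultrasphericalProductKernel α x y r) := by
  have hxy := mul_mem_Icc_neg_one_one hx hy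
  have hα1 : -1 < α := by linarith
  have hc : 0 < 2 * α + 1 := by linarith
  have hαk (k : ℕ) : -(1 / 2) < α + 2 * k := by linarith [k.cast_nonneg (α := ℝ)]
  refine (hasSum_sum_range_div_zonalWeight hc hr two_pos
    (b := fun k m => (ultraspherical (α + 2 * k) m).eval (x * y))
    (fun k m => abs_eval_ultraspherical_le_one (hαk k).le m hxy)
    (summable_majorant_ultrasphericalProductKernel hα1 hx hy hr hsmall) (fun k => ?_)
    (hasSum_mul_ultrasphericalPoissonKernel_add hα1 hx hy hr)).congr_fun fun n => ?_
  · rw [show 2 * α + 1 + 2 * (2 : ℕ) * k = 2 * (α + 2 * k) + 1 by push_cast; ring]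
    exact hasSum_ultrasphericalPoissonKernel (hαk k) hxy hr
  · rw [zonalWeight_mul_eval_mul_eval_ultraspherical hα, sum_mul]
    refine sum_congr rfl fun k hk => ?_
    have hkn : 2 * k ≤ n := by
      have := mem_range_succ_iff.1 hk
      lia
    rw [← pow_mul_pow_sub r hkn, mul_pow (4 * _) (r ^ 2), ← pow_mul, Nat.cast_ofNat]
    ring

lemma hasSum_ultrasphericalProductKernel (hα : -(1 / 2) < α) (hx : x ∈ Set.Ioo (-1) 1)
    (hy : y ∈ Set.Ioo (-1) 1) (hr : |r| < 1) :
    HasSum (fun n => zonalWeight (2 * α + 1) n *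
      ((ultraspherical α n).eval x * (ultraspherical α n).eval y) * r ^ n)
      (ultrasphericalProductKernel α x y r) := by
  refine hasSum_mul_pow_of_eventually (fun r hr => ?_)
    (analyticOnNhd_ultrasphericalProductKernel (by linarith) hx hy) ?_ hr
  · exact (summable_abs_ultrasphericalProduct hα hx hy hr).of_abs
  · filter_upwards [eventually_abs_lt_one_and_mul_abs_lt 2] with r hr
    exact hasSum_ultrasphericalProductKernel_of_small hα hx hy hr.1 hr.2

end ProductKernel

section Semigroup

lemma inv_Rn_mul_exp_mul_jacobiP_mul_jacobiP {α : ℝ} (hα : -(1 / 2) < α) (n : ℕ) (t x y : ℝ) :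
    (Rn α α n)⁻¹ * Real.exp (-n * t) * jacobiP α α n x * jacobiP α α n y =
      zonalWeight (2 * α + 1) n * ((ultraspherical α n).eval x * (ultraspherical α n).eval y) *
        Real.exp (-t) ^ n := by
  have hc : 0 < 2 * α + 1 := by linarith
  have hGamma := (Real.Gamma_pos_of_pos hc).ne'
  have hpoch := (poch_pos hc n).ne'
  have hpoch' := (poch_pos (show 0 < α + 1 by linarith) n).ne'
  rw [jacobiP_self_eq, jacobiP_self_eq, Rn, zonalWeight, ← Real.exp_nat_mul,
    show α + α + 2 = 2 * α + 1 + 1 by ring, show α + α + n + 1 = 2 * α + 1 + n by ring,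
    show 2 * (n : ℝ) + α + α + 1 = 2 * α + 1 + 2 * n by ring, Real.Gamma_add_one hc.ne',
    Gamma_add_natCast_eq_poch_mul hc, neg_mul_comm]
  field_simp
  ring

lemma cosh_sub_eq_div (s t : ℝ) : Real.cosh t - s =
    (1 - 2 * Real.exp (-t) * s + Real.exp (-t) ^ 2) / (2 * Real.exp (-t)) := by
  rw [Real.cosh_eq, Real.exp_neg]
  field_simp
  ring

lemma sinh_eq_div (t : ℝ) : Real.sinh t = (1 - Real.exp (-t) ^ 2) / (2 * Real.exp (-t)) := by
  rw [Real.sinh_eq, Real.exp_neg]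
  field_simp

lemma productKernel_argument_exp_neg (t x y : ℝ) :
    4 * ((1 - x ^ 2) * (1 - y ^ 2)) * Real.exp (-t) ^ 2 /
      (1 - 2 * Real.exp (-t) * (x * y) + Real.exp (-t) ^ 2) ^ 2 =
      (1 - x ^ 2) * (1 - y ^ 2) / (Real.cosh t - x * y) ^ 2 := by
  rw [cosh_sub_eq_div, div_pow, div_div_eq_mul_div]
  ring

lemma ultrasphericalPoissonKernel_exp_neg (α : ℝ) {s t : ℝ} (hs : s ∈ Set.Icc (-1) 1)
    (ht : 0 < t) : ultrasphericalPoissonKernel α s (Real.exp (-t)) =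
      Real.exp ((2 * α + 1) / 2 * t) / 2 ^ (α + 1 / 2) *
        (Real.sinh t / (Real.cosh t - s) ^ (α + 3 / 2)) := by
  have hr : |Real.exp (-t)| < 1 := by simpa using ht
  have hD := one_sub_two_mul_add_sq_pos hs hr
  have hexp : Real.exp ((2 * α + 1) / 2 * t) = Real.exp (-t) ^ (-(α + 1 / 2)) := by
    rw [← Real.exp_mul]
    ring_nf
  rw [cosh_sub_eq_div, sinh_eq_div, hexp, ultrasphericalPoissonKernel]
  set r := Real.exp (-t)
  have hr0 : 0 < r := Real.exp_pos _
  rw [Real.div_rpow hD.le (by positivity), show α + 3 / 2 = α + 1 / 2 + 1 by ring,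
    Real.rpow_add_one (x := 2 * r) (by positivity), Real.mul_rpow zero_le_two hr0.le,
    Real.rpow_neg hr0.le, Real.rpow_neg hD.le]
  field_simp

end Semigroup

/-- Subordinated ultraspherical Jacobi semigroup (`β = α > -1/2`): for every `t > 0` and
`x, y ∈ (-1,1)`,
`∑_{n≥0} R_n⁻¹ e^{-nt} P_n^{α,α}(x) P_n^{α,α}(y)
  = (e^{((2α+1)/2)t}/2^{α+1/2}) sinh(t)/(cosh t - xy)^{α+3/2}
      ∑_{n≥0} [((2α+3)/4)_n ((2α+5)/4)_n/((α+1)_n n!)] [(1-x²)(1-y²)/(cosh t - xy)²]ⁿ`,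
both series converging absolutely (the inner sum is the Gauss hypergeometric series
`₂F₁((2α+3)/4, (2α+5)/4; α+1; (1-x²)(1-y²)/(cosh t - xy)²)`). -/
theorem subordinated_ultraspherical_semigroup (α : ℝ) (hα : -(1 / 2 : ℝ) < α)
    (t : ℝ) (ht : 0 < t) (x y : ℝ) (hx : x ∈ Set.Ioo (-1 : ℝ) 1) (hy : y ∈ Set.Ioo (-1 : ℝ) 1) :
    Summable (fun n : ℕ =>
        |(Rn α α n)⁻¹ * Real.exp (-(n : ℝ) * t) * jacobiP α α n x * jacobiP α α n y|) ∧
      Summable (fun n : ℕ =>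
        |poch ((2 * α + 3) / 4) n * poch ((2 * α + 5) / 4) n /
            (poch (α + 1) n * (Nat.factorial n : ℝ)) *
          ((1 - x ^ 2) * (1 - y ^ 2) / (Real.cosh t - x * y) ^ 2) ^ n|) ∧
      ∑' n : ℕ, (Rn α α n)⁻¹ * Real.exp (-(n : ℝ) * t) * jacobiP α α n x * jacobiP α α n y =
        Real.exp ((2 * α + 1) / 2 * t) / 2 ^ (α + 1 / 2 : ℝ) *
          (Real.sinh t / (Real.cosh t - x * y) ^ (α + 3 / 2 : ℝ)) *
          ∑' n : ℕ,
            poch ((2 * α + 3) / 4) n * poch ((2 * α + 5) / 4) n /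
                (poch (α + 1) n * (Nat.factorial n : ℝ)) *
              ((1 - x ^ 2) * (1 - y ^ 2) / (Real.cosh t - x * y) ^ 2) ^ n := by
  have hr : |Real.exp (-t)| < 1 := by simpa using ht
  have hxy := mul_mem_Icc_neg_one_one hx hy
  have hz := abs_productKernel_argument_lt_one hx hy hr
  rw [productKernel_argument_exp_neg] at hz
  simp only [inv_Rn_mul_exp_mul_jacobiP_mul_jacobiP hα]
  refine ⟨summable_abs_ultrasphericalProduct hα hx hy hr,
    summable_abs_ordinaryHypergeometric (natCast_ne_neg_parameters (by linarith)) hz, ?_⟩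
  rw [(hasSum_ultrasphericalProductKernel hα hx hy hr).tsum_eq, ultrasphericalProductKernel,
    ultrasphericalPoissonKernel_exp_neg α hxy ht, productKernel_argument_exp_neg,
    ordinaryHypergeometric_eq_tsum_poch]
end

section
/- Let b < -1, let x_0 < -1 be the unique solution of (b-x)² = 4x(x+1) with x < -1, and for x ≠ -1 with (b-x)² + 4(x+1) ≥ 0 set φ_1 = x + 2 - b + √((b-x)² + 4(x+1)), b(φ,x) = -1 - √((b+1)² + 2φ(x+1)) and Λ(φ,x) = -(φ + b - b(φ,x))/2. Then: if (b²+3)/(2(b-1)) < x < x_0, the derivative ∂Λ/∂φ(φ_1,x) = -(1/2)(1 + (x+1)/√((b+1)² + 2φ_1(x+1))) is strictly positive; if x_0 < x < -1 or x > -1, then ∂Λ/∂φ(φ_1,x) is strictly negative. -/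
/-!
Write `D = (b - x)² + 4(x + 1)`. At the zero `φ₁` of `b + b(φ, x) + φ` the radicand
`(b + 1)² + 2φ₁(x + 1)` is the perfect square `(x + 1 + √D)²`. Hence, as soon as `x + 1 + √D > 0`,
the derivative of `Λ` at `φ₁` is `-(2(x + 1) + √D) / (2(x + 1 + √D))`, whose sign is opposite to
that of `2(x + 1) + √D`. For `x < -1` this amounts to comparing `D` with `4(x + 1)²`. Now
`D - 4(x + 1)² = (b - x)² - 4x(x + 1)` is a quadratic polynomial in `x` that vanishes at `x₀`, and
its other root is at least `-1`, so on `x < -1` it changes sign exactly at `x₀`.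
-/

namespace UltrasphericalJacobi

/-- The radicand `(b + 1)² + 2φ(x + 1)` in the tilted drift `b(φ, x)`. -/
def radicand (b x φ : ℝ) : ℝ := (b + 1) ^ 2 + 2 * φ * (x + 1)

/-- The tilted drift `b(φ, x)`. -/
noncomputable def tiltedDrift (b x φ : ℝ) : ℝ := -1 - √(radicand b x φ)

/-- The limiting normalized cumulant generating function `Λ(φ, x)`; the argument `φ` comes last, so
that `cgf b x` is the function to be differentiated. -/
noncomputable def cgf (b x φ : ℝ) : ℝ := -(φ + b - tiltedDrift b x φ) / 2

/-- A quarter of the discriminant of the quadratic equation `(b + φ - 1)² = (b + 1)² + 2φ(x + 1)`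
in `φ`, obtained from `b + b(φ, x) + φ = 0` by squaring. -/
def quarterDiscr (b x : ℝ) : ℝ := (b - x) ^ 2 + 4 * (x + 1)

/-- The boundary point `φ₁`: the larger root of the quadratic equation with discriminant
`4 * quarterDiscr b x`. If `quarterDiscr b x < 0`, the value `x + 2 - b` is junk. -/
noncomputable def boundaryPoint (b x : ℝ) : ℝ := x + 2 - b + √(quarterDiscr b x)

variable {b x x₀ φ : ℝ}

theorem hasDerivAt_cgf (hφ : radicand b x φ ≠ 0) :
    HasDerivAt (cgf b x) (-(1 / 2) * (1 + (x + 1) / √(radicand b x φ))) φ := by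
  have radicand_deriv : HasDerivAt (radicand b x) (2 * 1 * (x + 1)) φ :=
    (((hasDerivAt_id φ).const_mul 2).mul_const (x + 1)).const_add _
  have drift_deriv := (radicand_deriv.sqrt hφ).const_sub (-1)
  refine ((((hasDerivAt_id φ).add_const b).sub drift_deriv).neg.div_const 2).congr_deriv ?_
  ring

theorem radicand_boundaryPoint (hD : 0 ≤ quarterDiscr b x) :
    radicand b x (boundaryPoint b x) = (x + 1 + √(quarterDiscr b x)) ^ 2 := by
  have sq_sqrt_discr : √(quarterDiscr b x) ^ 2 = (b - x) ^ 2 + 4 * (x + 1) := Real.sq_sqrt hD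
  unfold radicand boundaryPoint
  linear_combination -sq_sqrt_discr

theorem quarterDiscr_pos (h : 0 < x + 1 + √(quarterDiscr b x)) : 0 < quarterDiscr b x := by
  rcases lt_or_ge 0 (x + 1) with hx | hx
  · unfold quarterDiscr
    positivity
  · exact Real.sqrt_pos.1 (by linarith)

theorem deriv_cgf_boundaryPoint (h : 0 < x + 1 + √(quarterDiscr b x)) :
    deriv (cgf b x) (boundaryPoint b x) =
      -(1 / 2) * (1 + (x + 1) / √(radicand b x (boundaryPoint b x))) := by
  refine (hasDerivAt_cgf ?_).deriv
  rw [radicand_boundaryPoint (quarterDiscr_pos h).le]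
  positivity

theorem deriv_cgf_boundaryPoint_eq_div (h : 0 < x + 1 + √(quarterDiscr b x)) :
    deriv (cgf b x) (boundaryPoint b x) =
      -(2 * (x + 1) + √(quarterDiscr b x)) / (2 * (x + 1 + √(quarterDiscr b x))) := by
  rw [deriv_cgf_boundaryPoint h, radicand_boundaryPoint (quarterDiscr_pos h).le,
    Real.sqrt_sq h.le]
  field_simp
  ring

theorem deriv_cgf_boundaryPoint_pos_iff (h : 0 < x + 1 + √(quarterDiscr b x)) :
    0 < deriv (cgf b x) (boundaryPoint b x) ↔ 2 * (x + 1) + √(quarterDiscr b x) < 0 := by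
  rw [deriv_cgf_boundaryPoint_eq_div h, div_pos_iff_of_pos_right (by positivity), neg_pos]

theorem deriv_cgf_boundaryPoint_neg_iff (h : 0 < x + 1 + √(quarterDiscr b x)) :
    deriv (cgf b x) (boundaryPoint b x) < 0 ↔ 0 < 2 * (x + 1) + √(quarterDiscr b x) := by
  rw [deriv_cgf_boundaryPoint_eq_div h, div_lt_iff₀ (by positivity), zero_mul, neg_lt_zero]

theorem quarterDiscr_sub_eq_mul (hx₀ : (b - x₀) ^ 2 = 4 * x₀ * (x₀ + 1)) :
    quarterDiscr b x - 4 * (x + 1) ^ 2 = (x₀ - x) * (3 * x + 3 * x₀ + 4 + 2 * b) := by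
  unfold quarterDiscr
  linear_combination hx₀

theorem quarterDiscr_sub_cofactor_neg (hx₀lt : x₀ < -1)
    (hx₀ : (b - x₀) ^ 2 = 4 * x₀ * (x₀ + 1)) (hx : x < -1) :
    3 * x + 3 * x₀ + 4 + 2 * b < 0 := by
  have mul_cofactor_at_neg_one : (-1 - x₀) * (3 * x₀ + 1 + 2 * b) = -(b + 1) ^ 2 := by
    linear_combination hx₀
  have cofactor_at_neg_one : 3 * x₀ + 1 + 2 * b ≤ 0 := by
    refine nonpos_of_mul_nonpos_right ?_ (by linarith : 0 < -1 - x₀)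
    rw [mul_cofactor_at_neg_one]
    exact neg_nonpos.2 (sq_nonneg _)
  linarith

theorem quarterDiscr_lt_four_mul_sq (hx₀lt : x₀ < -1)
    (hx₀ : (b - x₀) ^ 2 = 4 * x₀ * (x₀ + 1)) (hx : x < x₀) :
    quarterDiscr b x < 4 * (x + 1) ^ 2 := by
  rw [← sub_neg, quarterDiscr_sub_eq_mul hx₀]
  exact mul_neg_of_pos_of_neg (sub_pos.2 hx)
    (quarterDiscr_sub_cofactor_neg hx₀lt hx₀ (hx.trans hx₀lt))

theorem four_mul_sq_lt_quarterDiscr (hx₀lt : x₀ < -1)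
    (hx₀ : (b - x₀) ^ 2 = 4 * x₀ * (x₀ + 1)) (hx₀x : x₀ < x) (hx : x < -1) :
    4 * (x + 1) ^ 2 < quarterDiscr b x := by
  rw [← sub_pos, quarterDiscr_sub_eq_mul hx₀]
  exact mul_pos_of_neg_of_neg (sub_neg.2 hx₀x) (quarterDiscr_sub_cofactor_neg hx₀lt hx₀ hx)

theorem add_one_add_sqrt_quarterDiscr_pos (h : x * (2 * (b - 1)) < b ^ 2 + 3) :
    0 < x + 1 + √(quarterDiscr b x) := by
  have sq_lt : (-(x + 1)) ^ 2 < quarterDiscr b x := by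
    unfold quarterDiscr
    linarith
  linarith [Real.lt_sqrt_of_sq_lt sq_lt]

theorem two_mul_add_sqrt_quarterDiscr_neg (hx₀lt : x₀ < -1)
    (hx₀ : (b - x₀) ^ 2 = 4 * x₀ * (x₀ + 1)) (hx : x < x₀) :
    2 * (x + 1) + √(quarterDiscr b x) < 0 := by
  have discr_lt : quarterDiscr b x < (-(2 * (x + 1))) ^ 2 := by
    linarith [quarterDiscr_lt_four_mul_sq hx₀lt hx₀ hx]
  linarith [(Real.sqrt_lt' (by linarith)).2 discr_lt]

theorem two_mul_add_sqrt_quarterDiscr_pos (hx₀lt : x₀ < -1)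
    (hx₀ : (b - x₀) ^ 2 = 4 * x₀ * (x₀ + 1)) (hx : x₀ < x ∧ x < -1 ∨ -1 < x) :
    0 < 2 * (x + 1) + √(quarterDiscr b x) := by
  rcases hx with ⟨hx₀x, hx⟩ | hx
  · have lt_discr : (-(2 * (x + 1))) ^ 2 < quarterDiscr b x := by
      linarith [four_mul_sq_lt_quarterDiscr hx₀lt hx₀ hx₀x hx]
    linarith [Real.lt_sqrt_of_sq_lt lt_discr]
  · linarith [Real.sqrt_nonneg (quarterDiscr b x)]

end UltrasphericalJacobi

open UltrasphericalJacobi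

theorem derivative_sign_at_boundary_general {b x₀ x : ℝ} (hx₀lt : x₀ < -1)
    (hx₀ : (b - x₀) ^ 2 = 4 * x₀ * (x₀ + 1)) :
    (x * (2 * (b - 1)) < b ^ 2 + 3 → x < x₀ →
        deriv (cgf b x) (boundaryPoint b x) =
            -(1 / 2) * (1 + (x + 1) / √(radicand b x (boundaryPoint b x))) ∧
          0 < deriv (cgf b x) (boundaryPoint b x)) ∧
      (x₀ < x ∧ x < -1 ∨ -1 < x →
        deriv (cgf b x) (boundaryPoint b x) =
            -(1 / 2) * (1 + (x + 1) / √(radicand b x (boundaryPoint b x))) ∧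
          deriv (cgf b x) (boundaryPoint b x) < 0) := by
  constructor
  · intro hlo hx
    have denominator_pos := add_one_add_sqrt_quarterDiscr_pos hlo
    exact ⟨deriv_cgf_boundaryPoint denominator_pos,
      (deriv_cgf_boundaryPoint_pos_iff denominator_pos).2
        (two_mul_add_sqrt_quarterDiscr_neg hx₀lt hx₀ hx)⟩
  · intro hx
    have numerator_pos := two_mul_add_sqrt_quarterDiscr_pos hx₀lt hx₀ hx
    have denominator_pos : 0 < x + 1 + √(quarterDiscr b x) := by
      linarith [Real.sqrt_nonneg (quarterDiscr b x)]
    exact ⟨deriv_cgf_boundaryPoint denominator_pos,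
      (deriv_cgf_boundaryPoint_neg_iff denominator_pos).2 numerator_pos⟩

/-- Sign of `∂Λ/∂φ` at the boundary point `φ₁`: for `b < -1`, `x₀ < -1` the unique
solution of `(b-x)² = 4x(x+1)` with `x < -1`, and `x ≠ -1` with `(b-x)² + 4(x+1) ≥ 0`,
setting `φ₁ = x + 2 - b + √((b-x)² + 4(x+1))` and
`Λ(φ) = -(φ + b - (-1 - √((b+1)² + 2φ(x+1))))/2`:
if `(b²+3)/(2(b-1)) < x < x₀` then
`∂Λ/∂φ(φ₁,x) = -(1/2)(1 + (x+1)/√((b+1)² + 2φ₁(x+1)))` is strictly positive;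
if `x₀ < x < -1` or `x > -1` then `∂Λ/∂φ(φ₁,x)` is strictly negative. -/
theorem derivative_sign_at_boundary (b : ℝ) (hb : b < -1)
    (x₀ : ℝ) (hx₀lt : x₀ < -1) (hx₀ : (b - x₀) ^ 2 = 4 * x₀ * (x₀ + 1))
    (hx₀uniq : ∀ x, x < -1 → (b - x) ^ 2 = 4 * x * (x + 1) → x = x₀)
    (x : ℝ) (hxne : x ≠ -1) (hdisc : 0 ≤ (b - x) ^ 2 + 4 * (x + 1))
    (φ₁ : ℝ) (hφ₁ : φ₁ = x + 2 - b + Real.sqrt ((b - x) ^ 2 + 4 * (x + 1)))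
    (Λ : ℝ → ℝ)
    (hΛ : ∀ φ, Λ φ = -(φ + b - (-1 - Real.sqrt ((b + 1) ^ 2 + 2 * φ * (x + 1)))) / 2) :
    ((b ^ 2 + 3) / (2 * (b - 1)) < x → x < x₀ →
        deriv Λ φ₁ =
            -(1 / 2) * (1 + (x + 1) / Real.sqrt ((b + 1) ^ 2 + 2 * φ₁ * (x + 1))) ∧
          0 < deriv Λ φ₁) ∧
      ((x₀ < x ∧ x < -1) ∨ -1 < x → deriv Λ φ₁ < 0) := by
  obtain rfl : Λ = cgf b x := funext hΛ
  obtain rfl : φ₁ = boundaryPoint b x := hφ₁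
  have ⟨steep, nonsteep⟩ := derivative_sign_at_boundary_general (x := x) hx₀lt hx₀
  exact ⟨fun hlo => steep ((div_lt_iff_of_neg (by linarith)).1 hlo), fun hx => (nonsteep hx).2⟩
end
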